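/- arXiv:2411.03765 — 3 statements merged into one kernel-verified Lean document; each statement's English description precedes it below -/
import Mathlib

section
/- For every real number x > 0 and every real δ with 1 ≤ δ < 2, the principal value limit lim_{ε→0⁺} ( ∫_{-∞}^{-ε} e^t/t^δ dt + ∫_{ε}^{x} e^t/t^δ dt ) exists (where t^δ denotes -|t|^δ for t < 0), and this limit, denoted Ei^{(δ)}(x), satisfies Ei^{(δ)}(x) = ∫_0^x 2·sinh(t)/t^δ dt − ∫_x^∞ e^{-t}/t^δ dt. -/
/-!
The reflection `t ↦ -t` turns the integral over `(-∞, -ε]` into `-∫_ε^∞ e^{-t}/t^δ dt`. Splitting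
this at `x` and combining the part over `[ε, x]` with `∫_ε^x e^t/t^δ dt` gives, for `0 < ε < x`,
`∫_ε^x 2 sinh t / t^δ dt - ∫_x^∞ e^{-t}/t^δ dt`. Near `0` the remaining integrand is
`(sinh t / t) · t^(1-δ)` up to a constant, which is integrable because `1 - δ > -1`
(`intervalIntegrable_two_sinh_div_rpow`), so the limit `ε → 0⁺` is continuity of the integral in
its lower endpoint.
-/

open MeasureTheory Filter Topology

/-- The singularity at `0` is integrable: `sinh t / t` extends continuously to `0`, leaving the
factor `t ^ (1 - δ)`. -/
lemma intervalIntegrable_two_sinh_div_rpow {δ x : ℝ} (hx : 0 < x) (hδ2 : δ < 2) :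
    IntervalIntegrable (fun t : ℝ => 2 * Real.sinh t / t ^ δ) volume 0 x := by
  have hpow : IntervalIntegrable (fun t : ℝ => t ^ (1 - δ)) volume 0 x :=
    intervalIntegral.intervalIntegrable_rpow' (by linarith)
  have hcont : Continuous (dslope Real.sinh 0) := by
    rw [← continuousOn_univ, continuousOn_dslope univ_mem]
    exact ⟨Real.continuous_sinh.continuousOn, Real.differentiable_sinh 0⟩
  refine ((hpow.continuousOn_mul hcont.continuousOn).const_mul 2).congr ?_
  intro t ht
  rw [Set.uIoc_of_le hx.le] at ht
  have ht0 : 0 < t := ht.1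
  have hδ : 0 < t ^ δ := Real.rpow_pos_of_pos ht0 δ
  simp only [dslope_of_ne _ ht0.ne', slope_def_field, Real.sinh_zero, sub_zero,
    Real.rpow_sub ht0, Real.rpow_one]
  field_simp

lemma integrableOn_exp_neg_div_rpow (δ : ℝ) (hδ : 0 ≤ δ) {ε : ℝ} (hε : 0 < ε) :
    IntegrableOn (fun t : ℝ => Real.exp (-t) / t ^ δ) (Set.Ioi ε) := by
  have hmeas : AEStronglyMeasurable (fun t : ℝ => Real.exp (-t) / t ^ δ)
      (volume.restrict (Set.Ioi ε)) := by
    apply Measurable.aestronglyMeasurable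
    fun_prop
  refine Integrable.mono' ((integrableOn_exp_neg_Ioi ε).mul_const (ε ^ δ)⁻¹) hmeas ?_
  filter_upwards [ae_restrict_mem measurableSet_Ioi] with t ht
  have ht0 : 0 < t := hε.trans ht
  have h1 : 0 < ε ^ δ := Real.rpow_pos_of_pos hε δ
  have h2 : ε ^ δ ≤ t ^ δ := Real.rpow_le_rpow hε.le (le_of_lt ht) hδ
  rw [Real.norm_of_nonneg (by positivity), div_eq_mul_inv]
  gcongr

/-- The truncated principal value for `0 < ε < x`. -/
lemma truncated_eq {δ x ε : ℝ} (hδ : 0 ≤ δ) (hε : 0 < ε) (hεx : ε < x) :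
    (∫ t in Set.Iic (-ε), Real.exp t / (-(|t| ^ δ))) + ∫ t in ε..x, Real.exp t / t ^ δ
      = (∫ t in ε..x, 2 * Real.sinh t / t ^ δ) - ∫ t in Set.Ioi x, Real.exp (-t) / t ^ δ := by
  have hne : ∀ t ∈ Set.uIcc ε x, t ≠ 0 := by
    intro t ht
    rw [Set.uIcc_of_le hεx.le] at ht
    exact (hε.trans_le ht.1).ne'
  have hpow : ContinuousOn (fun t : ℝ => t ^ δ) (Set.uIcc ε x) :=
    continuousOn_id.rpow_const fun t ht => Or.inl (hne t ht)
  have hpow_ne : ∀ t ∈ Set.uIcc ε x, t ^ δ ≠ 0 := by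
    intro t ht
    rw [Set.uIcc_of_le hεx.le] at ht
    exact (Real.rpow_pos_of_pos (hε.trans_le ht.1) δ).ne'
  have hi1 : IntervalIntegrable (fun t : ℝ => Real.exp t / t ^ δ) volume ε x :=
    (Real.continuous_exp.continuousOn.div hpow hpow_ne).intervalIntegrable
  have hi2 : IntervalIntegrable (fun t : ℝ => Real.exp (-t) / t ^ δ) volume ε x :=
    ((Real.continuous_exp.comp continuous_neg).continuousOn.div hpow hpow_ne).intervalIntegrable
  have hreflect : (∫ t in Set.Iic (-ε), Real.exp t / (-(|t| ^ δ)))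
      = -∫ t in Set.Ioi ε, Real.exp (-t) / t ^ δ := by
    rw [← integral_comp_neg_Ioi ε (fun t => Real.exp t / (-(|t| ^ δ))), ← integral_neg]
    refine setIntegral_congr_fun measurableSet_Ioi fun t ht => ?_
    simp only [abs_neg, abs_of_pos (hε.trans ht), div_neg]
  have hsplit := intervalIntegral.integral_interval_add_Ioi
    (integrableOn_exp_neg_div_rpow δ hδ hε) (integrableOn_exp_neg_div_rpow δ hδ (hε.trans hεx))
  have hsinh : (∫ t in ε..x, 2 * Real.sinh t / t ^ δ)
      = (∫ t in ε..x, Real.exp t / t ^ δ) - ∫ t in ε..x, Real.exp (-t) / t ^ δ := by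
    rw [← intervalIntegral.integral_sub hi1 hi2]
    congr 1 with t
    rw [Real.sinh_eq]
    ring
  rw [hreflect, hsinh, ← hsplit]
  ring

/-- For `x > 0` and `1 ≤ δ < 2`, the principal value
`lim_{ε→0⁺} (∫_{-∞}^{-ε} e^t/t^δ dt + ∫_ε^x e^t/t^δ dt)` (where `t^δ` means `-|t|^δ` for
negative `t`) exists and equals `∫_0^x 2 sinh t / t^δ dt − ∫_x^∞ e^{-t}/t^δ dt`. -/
theorem statement0 (δ x : ℝ) (hx : 0 < x) (hδ1 : 1 ≤ δ) (hδ2 : δ < 2) :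
    Filter.Tendsto
      (fun ε : ℝ =>
        (∫ t in Set.Iic (-ε), Real.exp t / (-(|t| ^ δ))) + ∫ t in ε..x, Real.exp t / t ^ δ)
      (𝓝[>] 0)
      (𝓝 ((∫ t in (0:ℝ)..x, 2 * Real.sinh t / t ^ δ)
          - ∫ t in Set.Ioi x, Real.exp (-t) / t ^ δ)) := by
  have hint := intervalIntegrable_two_sinh_div_rpow hx hδ2
  rw [intervalIntegrable_iff_integrableOn_Icc_of_le hx.le, ← Set.uIcc_of_le hx.le] at hint
  have hcont := intervalIntegral.continuousOn_primitive_interval_left hint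
  have hlim : Tendsto (fun ε : ℝ => ∫ t in ε..x, 2 * Real.sinh t / t ^ δ) (𝓝[>] 0)
      (𝓝 (∫ t in (0:ℝ)..x, 2 * Real.sinh t / t ^ δ)) := by
    refine (hcont 0 Set.left_mem_uIcc).tendsto.mono_left ?_
    rw [Set.uIcc_of_le hx.le, ← nhdsWithin_Ioo_eq_nhdsGT hx]
    exact nhdsWithin_mono 0 Set.Ioo_subset_Icc_self
  refine (hlim.sub_const _).congr' ?_
  filter_upwards [Ioo_mem_nhdsGT hx] with ε hε
  exact (truncated_eq (by linarith) hε.1 hε.2).symm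
end

section
/- As x → 0⁺, ∫_x^∞ e^{-t}/t dt = −ln x − γ + o(1), where γ is the Euler–Mascheroni constant; equivalently, ∫_x^∞ e^{-t}/t dt + ln x converges to −γ = ∫_0^∞ (ln t)·e^{-t} dt as x → 0⁺. -/
open MeasureTheory Filter Topology

/-!
The value `∫_0^∞ log t · e^{-t} dt = -γ` is `Γ'(1)`, obtained by differentiating the Gamma
integral under the integral sign. For `x > 0`, integration by parts gives
`∫_x^∞ e^{-t}/t dt + log x = ∫_x^∞ log t · e^{-t} dt + log x · (1 - e^{-x})`.
As `x → 0⁺` the first term tends to the full integral, and the second vanishes because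
`0 ≤ 1 - e^{-x} ≤ x` and `x log x → 0`.
-/

lemma integral_log_mul_exp_neg :
    ∫ t in Set.Ioi (0:ℝ), Real.log t * Real.exp (-t) = -Real.eulerMascheroniConstant := by
  have h1 := Complex.hasDerivAt_GammaIntegral (s := 1) (by simp)
  have h2 : HasDerivAt Complex.GammaIntegral (-Real.eulerMascheroniConstant : ℂ) 1 := by
    refine Complex.hasDerivAt_Gamma_one.congr_of_eventuallyEq ?_
    have : {s : ℂ | 0 < s.re} ∈ 𝓝 (1:ℂ) :=
      (isOpen_lt continuous_const Complex.continuous_re).mem_nhds (by simp)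
    filter_upwards [this] with s hs using (Complex.Gamma_eq_integral hs).symm
  have h3 := h1.unique h2
  simp only [sub_self, Complex.cpow_zero, one_mul] at h3
  have h4 : ((∫ t in Set.Ioi (0:ℝ), Real.log t * Real.exp (-t) : ℝ) : ℂ)
      = ((-Real.eulerMascheroniConstant : ℝ) : ℂ) := by
    rw [← integral_complex_ofReal]
    push_cast at h3 ⊢
    exact h3
  exact_mod_cast h4

lemma integrableOn_log_mul_exp_neg :
    IntegrableOn (fun t : ℝ => Real.log t * Real.exp (-t)) (Set.Ioi 0) := by
  -- A non-integrable function would have integral `0`, but `γ > 1 / 2`.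
  refine Integrable.of_integral_ne_zero ?_
  rw [integral_log_mul_exp_neg]
  have := Real.one_half_lt_eulerMascheroniConstant
  linarith

lemma integrableOn_exp_neg_div {x : ℝ} (hx : 0 < x) :
    IntegrableOn (fun t : ℝ => Real.exp (-t) / t) (Set.Ioi x) := by
  have h := (integrableOn_exp_neg_Ioi x).const_mul (1 / x)
  refine Integrable.mono' h ?_ ?_
  · exact (by fun_prop : Measurable fun t : ℝ => Real.exp (-t) / t).aestronglyMeasurable
  · filter_upwards [ae_restrict_mem measurableSet_Ioi] with t ht
    have ht' : x < t := ht
    have h0 : 0 < t := hx.trans ht'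
    rw [Real.norm_of_nonneg (by positivity), one_div_mul_eq_div]
    gcongr

lemma tendsto_log_mul_exp_neg_atTop :
    Tendsto (fun t : ℝ => Real.log t * Real.exp (-t)) atTop (𝓝 0) := by
  have h : Tendsto (fun t : ℝ => t * Real.exp (-t)) atTop (𝓝 0) := by
    simpa using Real.tendsto_pow_mul_exp_neg_atTop_nhds_zero 1
  refine squeeze_zero' ?_ ?_ h
  · filter_upwards [eventually_ge_atTop 1] with t ht
    exact mul_nonneg (Real.log_nonneg ht) (Real.exp_pos _).le
  · filter_upwards [eventually_ge_atTop 1] with t ht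
    gcongr
    exact Real.log_le_self (by linarith)

lemma integral_exp_neg_div_add_log {x : ℝ} (hx : 0 < x) :
    (∫ t in Set.Ioi x, Real.exp (-t) / t) + Real.log x =
      (∫ t in Set.Ioi x, Real.log t * Real.exp (-t)) + Real.log x * (1 - Real.exp (-x)) := by
  have hpos : ∀ t ∈ Set.Ioi x, t ≠ 0 := fun t ht => (hx.trans ht).ne'
  have hlog := integrableOn_log_mul_exp_neg.mono_set (Set.Ioi_subset_Ioi hx.le)
  have hdiv := integrableOn_exp_neg_div hx
  have key := integral_Ioi_mul_deriv_eq_deriv_mul (a := x) (u := Real.log) (u' := fun t => t⁻¹)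
    (v := fun t => Real.exp (-t)) (v' := fun t => -Real.exp (-t))
    (a' := Real.log x * Real.exp (-x)) (b' := 0)
    (fun t ht => Real.hasDerivAt_log (hpos t ht))
    (fun t _ => by simpa using (hasDerivAt_neg t).exp)
    (by simpa [Pi.mul_def] using hlog.neg)
    (by simpa [Pi.mul_def, div_eq_inv_mul] using hdiv)
    (((Real.continuousAt_log hx.ne').mul (by fun_prop)).tendsto.mono_left nhdsWithin_le_nhds)
    tendsto_log_mul_exp_neg_atTop
  simp only [mul_neg, integral_neg] at key
  simp only [div_eq_inv_mul]
  linarith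

lemma tendsto_log_mul_one_sub_exp_neg :
    Tendsto (fun x : ℝ => Real.log x * (1 - Real.exp (-x))) (𝓝[>] 0) (𝓝 0) := by
  have h : Tendsto (fun x : ℝ => |x * Real.log x|) (𝓝[>] 0) (𝓝 0) := by
    have := (Real.continuous_mul_log.abs.tendsto 0).mono_left
      (nhdsWithin_le_nhds (s := Set.Ioi (0:ℝ)))
    simpa using this
  refine squeeze_zero_norm' ?_ h
  filter_upwards [self_mem_nhdsWithin] with x hx
  have hx' : 0 < x := hx
  have h1 : 1 - Real.exp (-x) ≤ x := by linarith [Real.add_one_le_exp (-x)]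
  have h2 : 0 ≤ 1 - Real.exp (-x) := by
    have : Real.exp (-x) ≤ 1 := Real.exp_le_one_iff.2 (by linarith)
    linarith
  rw [Real.norm_eq_abs, abs_mul, abs_mul, abs_of_nonneg h2, abs_of_pos hx', mul_comm]
  gcongr

/-- As `x → 0⁺`, `∫_x^∞ e^{-t}/t dt = −ln x − γ + o(1)` where `γ` is the Euler–Mascheroni
constant; that is, `∫_x^∞ e^{-t}/t dt + ln x` converges to `−γ = ∫_0^∞ (ln t) e^{-t} dt`. -/
theorem statement3 :
    Tendsto (fun x : ℝ => (∫ t in Set.Ioi x, Real.exp (-t) / t) + Real.log x) (𝓝[>] 0)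
      (𝓝 (-Real.eulerMascheroniConstant)) ∧
    -Real.eulerMascheroniConstant = ∫ t in Set.Ioi (0:ℝ), Real.log t * Real.exp (-t) := by
  refine ⟨?_, integral_log_mul_exp_neg.symm⟩
  have hcover : AECover (volume.restrict (Set.Ioi (0:ℝ))) (𝓝[>] (0:ℝ)) fun x => Set.Ioi x :=
    aecover_Ioi_of_Ioi (tendsto_id.mono_left nhdsWithin_le_nhds)
  have hmain := hcover.integral_tendsto_of_countably_generated integrableOn_log_mul_exp_neg
  rw [integral_log_mul_exp_neg] at hmain
  have hsum := hmain.add tendsto_log_mul_one_sub_exp_neg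
  rw [add_zero] at hsum
  refine hsum.congr' ?_
  filter_upwards [self_mem_nhdsWithin] with x hx
  have hx' : 0 < x := hx
  rw [integral_exp_neg_div_add_log hx', Measure.restrict_restrict measurableSet_Ioi,
    Set.inter_eq_left.2 (Set.Ioi_subset_Ioi hx'.le)]
end

section
/- The function φ_1 : ℝ \ {0} → ℝ defined by φ_1(x) = |x| e^{-x²/2} Ei^{(3/2)}(x²/2) is integrable on ℝ, and for almost every t ∈ ℝ its Fourier transform satisfies ∫_ℝ e^{-itx} φ_1(x) dx = −√(2π) · φ_1(t); that is, φ_1 is an eigenfunction of the Fourier transform on ℝ with eigenvalue −(2π)^{1/2}. -/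
/-!
Write `g x = |x| exp (-x² / 2)` (`absGauss`) and `ĝ t = ∫ exp (-i t x) g x dx`. The theorem rests on
the identity, valid for `x ≠ 0`,

  `φ₁ x = 2 √π g x - √2 ĝ x`.

Since `g` is even, Fourier inversion says that the transform of `ĝ` is `2 π g`; hence the transform
of `φ₁` is `2 √π ĝ - 2 √2 π g = -√(2π) φ₁`.

To prove the identity (`phi_eq`), both sides are expressed through Dawson's function
`D r = exp (-r² / 2) ∫₀ʳ exp (u² / 2) du`. Integrating by parts on each side of the singularity, the
boundary terms `± 2 ε ^ (-1/2)` cancel in the principal value, which gives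
`Ei^{(3/2)}(x) = 2 √π - 2 exp x / √x + 2 √2 ∫₀^{√(2x)} exp (u² / 2) du` (`Ei_three_halves`).
On the other side `ĝ = 2 cosT` with `cosT t = ∫₀^∞ x exp (-x² / 2) cos (t x) dx = 1 - t S t`, where
`S t = ∫₀^∞ exp (-x² / 2) sin (t x) dx` satisfies `S' = 1 - t S`, `S 0 = 0`, so that `S = D`
(`cosT_eq`, `sinT_eq`). Finally two integrations by parts give `cosT t = O(1 / t²)`, so `ĝ` is
integrable (`integrable_cosT`): this yields the integrability of `φ₁` and justifies the inversion
(`ft_cosT`).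
-/

open MeasureTheory Filter Topology

/-- The `δ`-exponential integral `Ei^{(δ)}(x)`, defined for `x > 0` (and `δ < 2`) as the
principal value `lim_{ε→0⁺} (∫_{-∞}^{-ε} e^t/t^δ dt + ∫_ε^x e^t/t^δ dt)`, where `t^δ` means
`-|t|^δ` for negative `t`. -/
noncomputable def Ei (δ x : ℝ) : ℝ :=
  limUnder (𝓝[>] (0:ℝ)) (fun ε =>
    (∫ t in Set.Iic (-ε), Real.exp t / (-(|t| ^ δ))) + ∫ t in ε..x, Real.exp t / t ^ δ)

/-! ### Closed form of the exponential integral of order `3/2` -/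

/-- The Gaussian primitive `r ↦ ∫₀ʳ exp (c u² / 2) du`, used with `c = 1` and `c = -1`. -/
noncomputable def gaussPrim (c r : ℝ) : ℝ := ∫ u in (0:ℝ)..r, Real.exp (c * u ^ 2 / 2)

lemma hasDerivAt_gaussPrim (c r : ℝ) :
    HasDerivAt (gaussPrim c) (Real.exp (c * r ^ 2 / 2)) r := by
  have hc : Continuous fun u : ℝ => Real.exp (c * u ^ 2 / 2) := by fun_prop
  exact intervalIntegral.integral_hasDerivAt_right (hc.intervalIntegrable _ _)
    (hc.stronglyMeasurableAtFilter _ _) hc.continuousAt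

/-- A primitive of `exp (c t) / t ^ (3/2)` on `t > 0`, obtained from one integration by parts and
the substitution `t = u² / 2`. -/
noncomputable def eiPrim (c t : ℝ) : ℝ :=
  -2 * Real.exp (c * t) / √t + 2 * √2 * c * gaussPrim c (√2 * √t)

lemma rpow_three_halves {t : ℝ} (ht : 0 < t) : t ^ (3 / 2 : ℝ) = t * √t := by
  rw [Real.sqrt_eq_rpow, show (3 / 2 : ℝ) = 1 + 1 / 2 by norm_num, Real.rpow_add ht, Real.rpow_one]

lemma hasDerivAt_eiPrim (c : ℝ) {t : ℝ} (ht : 0 < t) :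
    HasDerivAt (eiPrim c) (Real.exp (c * t) / t ^ (3 / 2 : ℝ)) t := by
  have hs : 0 < √t := Real.sqrt_pos.2 ht
  have hsq : √t ^ 2 = t := Real.sq_sqrt ht.le
  have h2 : √2 ^ 2 = (2:ℝ) := Real.sq_sqrt (by norm_num)
  have d1 : HasDerivAt (fun t : ℝ => √t) (1 / (2 * √t)) t := Real.hasDerivAt_sqrt ht.ne'
  have d2 : HasDerivAt (fun t : ℝ => -2 * Real.exp (c * t)) (-2 * (Real.exp (c * t) * c)) t := by
    have := ((hasDerivAt_id t).const_mul c).exp.const_mul (-2)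
    simpa using this
  have d3 := (hasDerivAt_gaussPrim c (√2 * √t)).comp t (d1.const_mul √2)
  have d4 := (d2.div d1 hs.ne').add (d3.const_mul (2 * √2 * c))
  refine d4.congr_deriv ?_
  rw [rpow_three_halves ht, show c * (√2 * √t) ^ 2 / 2 = c * t by rw [mul_pow, hsq, h2]; ring]
  rw [show t * √t = √t ^ 3 by rw [pow_succ, hsq], hsq]
  nth_rewrite 6 [← hsq]
  field_simp
  rw [h2, hsq]
  ring

lemma integral_gauss_half : ∫ x in Set.Ioi (0:ℝ), Real.exp (-1 * x ^ 2 / 2) = √(2 * Real.pi) / 2 := by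
  have := integral_gaussian_Ioi (1 / 2)
  rw [show Real.pi / (1 / 2) = 2 * Real.pi by ring] at this
  rw [← this]
  congr 1; ext x; congr 1; ring

lemma integrable_gauss_half : Integrable fun x : ℝ => Real.exp (-1 * x ^ 2 / 2) := by
  have := integrable_exp_neg_mul_sq (b := 1 / 2) (by norm_num)
  refine this.congr (ae_of_all _ fun x => ?_)
  simp only; congr 1; ring

lemma tendsto_eiPrim_neg_one_atTop :
    Tendsto (eiPrim (-1)) atTop (𝓝 (-(2 * √Real.pi))) := by
  have h1 : Tendsto (fun t : ℝ => -2 * Real.exp (-1 * t) / √t) atTop (𝓝 0) := by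
    have e : Tendsto (fun t : ℝ => -2 * Real.exp (-1 * t)) atTop (𝓝 (-2 * 0)) := by
      simp only [neg_one_mul]
      exact Real.tendsto_exp_neg_atTop_nhds_zero.const_mul _
    exact e.div_atTop Real.tendsto_sqrt_atTop
  have h2 : Tendsto (fun t : ℝ => gaussPrim (-1) (√2 * √t)) atTop (𝓝 (√(2 * Real.pi) / 2)) := by
    rw [← integral_gauss_half]
    exact intervalIntegral_tendsto_integral_Ioi 0 integrable_gauss_half.integrableOn
      (Real.tendsto_sqrt_atTop.const_mul_atTop (by positivity))
  have h3 := h1.add (h2.const_mul (2 * √2 * (-1)))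
  have hlim : -(2 * √Real.pi) = 0 + 2 * √2 * (-1) * (√(2 * Real.pi) / 2) := by
    rw [Real.sqrt_mul (by norm_num)]
    have h : √2 * √2 = (2:ℝ) := Real.mul_self_sqrt (by norm_num)
    linear_combination (√Real.pi) * h
  rw [hlim]
  exact h3

lemma tendsto_sinh_div_sqrt :
    Tendsto (fun ε : ℝ => (Real.exp ε - Real.exp (-ε)) / √ε) (𝓝[>] 0) (𝓝 0) := by
  have hd : HasDerivAt (fun ε : ℝ => Real.exp ε - Real.exp (-ε)) 2 0 := by
    have := (Real.hasDerivAt_exp 0).sub ((hasDerivAt_neg (0:ℝ)).exp)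
    refine this.congr_deriv ?_
    norm_num
  have h1 := (hasDerivAt_iff_tendsto_slope_zero.1 hd).mono_left
    (nhdsWithin_mono 0 (fun x (hx : 0 < x) => (ne_of_gt hx : x ≠ 0)))
  have h2 : Tendsto (fun ε : ℝ => √ε) (𝓝[>] 0) (𝓝 0) := by
    have := (Real.continuous_sqrt.tendsto 0).mono_left (nhdsWithin_le_nhds (s := Set.Ioi 0))
    simpa using this
  have h3 := h1.mul h2
  rw [mul_zero] at h3
  refine h3.congr' ?_
  filter_upwards [self_mem_nhdsWithin] with ε hε
  have hε : 0 < ε := hε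
  have hs : 0 < √ε := Real.sqrt_pos.2 hε
  simp
  nth_rewrite 1 [← Real.sq_sqrt hε.le]
  field_simp

/-- Closed form of the principal value for `δ = 3/2`: the divergent boundary terms
`± 2 ε ^ (-1/2)` of the two one-sided primitives cancel. -/
lemma Ei_three_halves {x : ℝ} (hx : 0 < x) :
    Ei (3 / 2) x = 2 * √Real.pi + eiPrim 1 x := by
  refine Tendsto.limUnder_eq ?_
  have hg : ∀ c : ℝ, Tendsto (fun ε : ℝ => gaussPrim c (√2 * √ε)) (𝓝[>] 0) (𝓝 0) := by
    intro c
    have hc : Continuous (gaussPrim c) :=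
      continuous_iff_continuousAt.2 fun r => (hasDerivAt_gaussPrim c r).continuousAt
    have : Continuous fun ε : ℝ => gaussPrim c (√2 * √ε) := by fun_prop
    have := (this.tendsto 0).mono_left (nhdsWithin_le_nhds (s := Set.Ioi 0))
    simpa [gaussPrim] using this
  have key : Tendsto (fun ε : ℝ => 2 * √Real.pi + eiPrim 1 x
      + 2 * ((Real.exp ε - Real.exp (-ε)) / √ε) - 2 * √2 * gaussPrim (-1) (√2 * √ε)
      - 2 * √2 * gaussPrim 1 (√2 * √ε)) (𝓝[>] 0) (𝓝 (2 * √Real.pi + eiPrim 1 x)) := by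
    have := (((tendsto_const_nhds (x := 2 * √Real.pi + eiPrim 1 x)).add
      (tendsto_sinh_div_sqrt.const_mul 2)).sub ((hg (-1)).const_mul (2 * √2))).sub
      ((hg 1).const_mul (2 * √2))
    simpa using this
  refine key.congr' ?_
  filter_upwards [self_mem_nhdsWithin, Ioo_mem_nhdsGT hx] with ε hε hεx
  have hε : 0 < ε := hε
  have i1 : ∫ t in Set.Iic (-ε), Real.exp t / (-(|t| ^ (3 / 2 : ℝ)))
      = -(-(2 * √Real.pi) - eiPrim (-1) ε) := by
    rw [← integral_Ioi_of_hasDerivAt_of_nonneg' (g := eiPrim (-1))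
      (fun t ht => hasDerivAt_eiPrim (-1) (lt_of_lt_of_le hε ht))
      (fun t ht => by
        have : 0 < t := lt_trans hε ht
        positivity) tendsto_eiPrim_neg_one_atTop]
    rw [← integral_neg]
    have := integral_comp_neg_Iic (-ε)
      (fun t : ℝ => -(Real.exp (-1 * t) / t ^ (3 / 2 : ℝ)))
    rw [neg_neg] at this
    rw [← this]
    refine setIntegral_congr_fun measurableSet_Iic fun t ht => ?_
    have ht : t ≤ -ε := ht
    rw [abs_of_neg (by linarith), div_neg]
    simp
  have i2 : ∫ t in ε..x, Real.exp t / t ^ (3 / 2 : ℝ) = eiPrim 1 x - eiPrim 1 ε := by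
    have hpos : ∀ t ∈ Set.uIcc ε x, 0 < t := by
      intro t ht
      rw [Set.uIcc_of_le hεx.2.le] at ht
      linarith [ht.1]
    refine intervalIntegral.integral_eq_sub_of_hasDerivAt (fun t ht => ?_) ?_
    · have := hasDerivAt_eiPrim 1 (hpos t ht)
      simpa using this
    · refine ContinuousOn.intervalIntegrable ?_
      refine Real.continuous_exp.continuousOn.div
        (continuousOn_id.rpow_const fun t ht => Or.inl (hpos t ht).ne') fun t ht => ?_
      exact (Real.rpow_pos_of_pos (hpos t ht) _).ne'
  rw [i1, i2]
  unfold eiPrim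
  ring_nf

/-! ### Half-line sine and cosine transforms -/

/-- The half-line sine transform of the Gaussian. -/
noncomputable def sinT (t : ℝ) : ℝ :=
  ∫ x in Set.Ioi (0:ℝ), Real.exp (-x ^ 2 / 2) * Real.sin (t * x)

/-- The half-line cosine transform of `x exp (-x² / 2)`. -/
noncomputable def cosT (t : ℝ) : ℝ :=
  ∫ x in Set.Ioi (0:ℝ), x * Real.exp (-x ^ 2 / 2) * Real.cos (t * x)

lemma integrable_pow_gauss (n : ℕ) : Integrable fun x : ℝ => x ^ n * Real.exp (-x ^ 2 / 2) := by
  have := integrable_rpow_mul_exp_neg_mul_sq (b := 1 / 2) (by norm_num) (s := n)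
    (by have : (0:ℝ) ≤ n := n.cast_nonneg
        linarith)
  refine this.congr (ae_of_all _ fun x => ?_)
  simp only [Real.rpow_natCast]
  congr 2; ring

lemma tendsto_pow_gauss (n : ℕ) :
    Tendsto (fun x : ℝ => x ^ n * Real.exp (-x ^ 2 / 2)) atTop (𝓝 0) := by
  have := (tendsto_rpow_abs_mul_exp_neg_mul_sq_cocompact (a := 1 / 2) (by norm_num) n).mono_left
    atTop_le_cocompact
  refine this.congr' ?_
  filter_upwards [eventually_ge_atTop 0] with x hx
  rw [abs_of_nonneg hx, Real.rpow_natCast]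
  congr 2; ring

lemma integrable_pow_gauss_mul (n : ℕ) {g : ℝ → ℝ} (hg : Continuous g) (hb : ∀ x, |g x| ≤ 1) :
    Integrable fun x : ℝ => x ^ n * Real.exp (-x ^ 2 / 2) * g x :=
  (integrable_pow_gauss n).mul_bdd hg.aestronglyMeasurable (c := 1) (ae_of_all _ hb)

lemma tendsto_pow_gauss_mul (n : ℕ) {g : ℝ → ℝ} (hb : ∀ x, |g x| ≤ 1) :
    Tendsto (fun x : ℝ => x ^ n * Real.exp (-x ^ 2 / 2) * g x) atTop (𝓝 0) := by
  have h0 : Tendsto (fun x : ℝ => ‖x ^ n * Real.exp (-x ^ 2 / 2)‖) atTop (𝓝 0) := by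
    simpa only [norm_zero] using (tendsto_pow_gauss n).norm
  refine squeeze_zero_norm (fun x => ?_) h0
  rw [norm_mul]
  exact mul_le_of_le_one_right (norm_nonneg _) (hb x)

lemma hasDerivAt_gauss (x : ℝ) :
    HasDerivAt (fun x : ℝ => Real.exp (-x ^ 2 / 2)) (-x * Real.exp (-x ^ 2 / 2)) x := by
  have := (((hasDerivAt_id x).pow 2).neg.div_const 2).exp
  refine this.congr_deriv ?_
  simp; ring

lemma hasDerivAt_sin_mul (t x : ℝ) :
    HasDerivAt (fun x => Real.sin (t * x)) (t * Real.cos (t * x)) x := by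
  have := ((hasDerivAt_id x).const_mul t).sin
  refine this.congr_deriv ?_
  simp; ring

lemma hasDerivAt_cos_mul (t x : ℝ) :
    HasDerivAt (fun x => Real.cos (t * x)) (-(t * Real.sin (t * x))) x := by
  have := ((hasDerivAt_id x).const_mul t).cos
  refine this.congr_deriv ?_
  simp; ring

lemma integrable_sin (n : ℕ) (t : ℝ) :
    Integrable fun x : ℝ => x ^ n * Real.exp (-x ^ 2 / 2) * Real.sin (t * x) :=
  integrable_pow_gauss_mul n (by fun_prop) fun _ => Real.abs_sin_le_one _

lemma integrable_cos (n : ℕ) (t : ℝ) :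
    Integrable fun x : ℝ => x ^ n * Real.exp (-x ^ 2 / 2) * Real.cos (t * x) :=
  integrable_pow_gauss_mul n (by fun_prop) fun _ => Real.abs_cos_le_one _

/-- Integration by parts, from the primitive `-exp (-x² / 2) cos (t x)`. -/
lemma cosT_eq (t : ℝ) : cosT t = 1 - t * sinT t := by
  have hc : Integrable fun x : ℝ => x * Real.exp (-x ^ 2 / 2) * Real.cos (t * x) := by
    simpa using integrable_cos 1 t
  have hs : Integrable fun x : ℝ => t * (Real.exp (-x ^ 2 / 2) * Real.sin (t * x)) := by
    simpa using (integrable_sin 0 t).const_mul t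
  have h := integral_Ioi_of_hasDerivAt_of_tendsto' (a := 0) (m := 0)
    (f := fun x : ℝ => -(Real.exp (-x ^ 2 / 2) * Real.cos (t * x)))
    (f' := fun x : ℝ => x * Real.exp (-x ^ 2 / 2) * Real.cos (t * x)
      + t * (Real.exp (-x ^ 2 / 2) * Real.sin (t * x)))
    (fun x _ => by
      refine ((hasDerivAt_gauss x).mul (hasDerivAt_cos_mul t x)).neg.congr_deriv ?_
      ring)
    (hc.add hs).integrableOn
    (by
      have := (tendsto_pow_gauss_mul 0 (g := fun x => Real.cos (t * x))
        fun _ => Real.abs_cos_le_one _).neg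
      simpa using this)
  rw [integral_add hc.integrableOn hs.integrableOn, integral_const_mul] at h
  simp at h
  unfold cosT sinT
  simp only [neg_div]
  simp only [neg_div] at h
  linarith

/-- Two integrations by parts, from the primitive `t f sin (t x) + f' cos (t x)` with
`f = x exp (-x² / 2)`, give the quadratic decay of `cosT`. -/
lemma sq_mul_cosT_bound : ∃ C : ℝ, ∀ t : ℝ, t ^ 2 * |cosT t| ≤ C := by
  refine ⟨1 + ∫ x in Set.Ioi (0:ℝ), ‖x ^ 3 * Real.exp (-x ^ 2 / 2)
    - 3 * (x ^ 1 * Real.exp (-x ^ 2 / 2))‖, fun t => ?_⟩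
  have hc := (integrable_cos 1 t).const_mul (t ^ 2)
  have hd : Integrable fun x : ℝ => (x ^ 3 * Real.exp (-x ^ 2 / 2)
    - 3 * (x ^ 1 * Real.exp (-x ^ 2 / 2))) :=
    (integrable_pow_gauss 3).sub ((integrable_pow_gauss 1).const_mul 3)
  have hdc : Integrable fun x : ℝ => (x ^ 3 * Real.exp (-x ^ 2 / 2)
      - 3 * (x ^ 1 * Real.exp (-x ^ 2 / 2))) * Real.cos (t * x) :=
    hd.mul_bdd (c := 1) (by fun_prop) (ae_of_all _ fun x => Real.abs_cos_le_one _)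
  have h := integral_Ioi_of_hasDerivAt_of_tendsto' (a := 0) (m := 0)
    (f := fun x : ℝ => t * (x * Real.exp (-x ^ 2 / 2) * Real.sin (t * x))
      + (Real.exp (-x ^ 2 / 2) * Real.cos (t * x)
        - x ^ 2 * Real.exp (-x ^ 2 / 2) * Real.cos (t * x)))
    (f' := fun x : ℝ => t ^ 2 * (x ^ 1 * Real.exp (-x ^ 2 / 2) * Real.cos (t * x))
      + (x ^ 3 * Real.exp (-x ^ 2 / 2)
        - 3 * (x ^ 1 * Real.exp (-x ^ 2 / 2))) * Real.cos (t * x))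
    (fun x _ => by
      refine (((((hasDerivAt_id x).mul (hasDerivAt_gauss x)).mul
        (hasDerivAt_sin_mul t x)).const_mul t).add
        (((hasDerivAt_gauss x).mul (hasDerivAt_cos_mul t x)).sub
        (((hasDerivAt_pow 2 x).mul (hasDerivAt_gauss x)).mul
          (hasDerivAt_cos_mul t x)))).congr_deriv ?_
      simp
      ring)
    (hc.add hdc).integrableOn
    (by
      have a1 := (tendsto_pow_gauss_mul 1 (g := fun x => Real.sin (t * x))
        fun _ => Real.abs_sin_le_one _).const_mul t
      have a2 := (tendsto_pow_gauss_mul 0 (g := fun x => Real.cos (t * x))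
        fun _ => Real.abs_cos_le_one _)
      have a3 := (tendsto_pow_gauss_mul 2 (g := fun x => Real.cos (t * x))
        fun _ => Real.abs_cos_le_one _)
      have := a1.add (a2.sub a3)
      simpa using this)
  rw [integral_add hc.integrableOn hdc.integrableOn, integral_const_mul] at h
  have hct : ∫ x in Set.Ioi (0:ℝ), x ^ 1 * Real.exp (-x ^ 2 / 2) * Real.cos (t * x) = cosT t := by
    simp [cosT]
  rw [hct] at h
  have hb : ‖∫ x in Set.Ioi (0:ℝ), (x ^ 3 * Real.exp (-x ^ 2 / 2)
        - 3 * (x ^ 1 * Real.exp (-x ^ 2 / 2))) * Real.cos (t * x)‖ ≤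
      ∫ x in Set.Ioi (0:ℝ), ‖x ^ 3 * Real.exp (-x ^ 2 / 2)
        - 3 * (x ^ 1 * Real.exp (-x ^ 2 / 2))‖ := by
    refine norm_integral_le_of_norm_le hd.norm.integrableOn (ae_of_all _ fun x => ?_)
    rw [norm_mul]
    exact mul_le_of_le_one_right (norm_nonneg _) (Real.abs_cos_le_one _)
  rw [← abs_of_nonneg (sq_nonneg t), ← abs_mul]
  rw [Real.norm_eq_abs] at hb
  have : t ^ 2 * cosT t = -1 - ∫ x in Set.Ioi (0:ℝ), (x ^ 3 * Real.exp (-x ^ 2 / 2)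
        - 3 * (x ^ 1 * Real.exp (-x ^ 2 / 2))) * Real.cos (t * x) := by
    have h0 : (0:ℝ) - (t * (0 * Real.exp (-0 ^ 2 / 2) * Real.sin (t * 0))
      + (Real.exp (-0 ^ 2 / 2) * Real.cos (t * 0)
        - 0 ^ 2 * Real.exp (-0 ^ 2 / 2) * Real.cos (t * 0))) = -1 := by simp
    linarith
  rw [this]
  refine (abs_sub _ _).trans ?_
  rw [abs_neg, abs_one]
  linarith

lemma hasDerivAt_sinT (t : ℝ) : HasDerivAt sinT (cosT t) t := by
  refine (hasDerivAt_integral_of_dominated_loc_of_deriv_le (μ := volume.restrict (Set.Ioi (0:ℝ)))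
    (F := fun t x => Real.exp (-x ^ 2 / 2) * Real.sin (t * x))
    (F' := fun t x => x * Real.exp (-x ^ 2 / 2) * Real.cos (t * x))
    (bound := fun x => ‖x ^ 1 * Real.exp (-x ^ 2 / 2)‖) (s := Set.univ) univ_mem
    (Eventually.of_forall fun s => ?_) ?_ ?_ (ae_of_all _ fun x s _ => ?_)
    (integrable_pow_gauss 1).norm.integrableOn (ae_of_all _ fun x s _ => ?_)).2
  · exact Continuous.aestronglyMeasurable (by fun_prop)
  · have h := integrable_sin 0 t
    simp only [pow_zero, one_mul] at h
    exact h.integrableOn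
  · exact Continuous.aestronglyMeasurable (by fun_prop)
  · rw [norm_mul, pow_one]
    exact mul_le_of_le_one_right (norm_nonneg _) (Real.abs_cos_le_one _)
  · have := (((hasDerivAt_id s).mul_const x).sin).const_mul (Real.exp (-x ^ 2 / 2))
    refine this.congr_deriv ?_
    simp; ring

/-- `sinT` is Dawson's function: both sides solve `y' = 1 - t y` with `y 0 = 0`. -/
lemma sinT_eq (t : ℝ) : sinT t = Real.exp (-t ^ 2 / 2) * gaussPrim 1 t := by
  have hd : ∀ t, HasDerivAt (fun t => Real.exp (1 * t ^ 2 / 2) * sinT t - gaussPrim 1 t) 0 t := by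
    intro t
    have e : HasDerivAt (fun t : ℝ => Real.exp (1 * t ^ 2 / 2))
        (t * Real.exp (1 * t ^ 2 / 2)) t := by
      have := ((((hasDerivAt_id t).pow 2).const_mul 1).div_const 2).exp
      refine this.congr_deriv ?_
      simp; ring
    refine ((e.mul (hasDerivAt_sinT t)).sub (hasDerivAt_gaussPrim 1 t)).congr_deriv ?_
    rw [cosT_eq]; ring
  have hconst := is_const_of_deriv_eq_zero (fun t => (hd t).differentiableAt)
    (fun t => (hd t).deriv) t 0
  have h0 : Real.exp (1 * t ^ 2 / 2) * sinT t = gaussPrim 1 t := by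
    simp [sinT, gaussPrim] at hconst
    simp [sinT, gaussPrim]
    linarith
  rw [← h0, ← mul_assoc, ← Real.exp_add]
  ring_nf
  simp

lemma integrable_cosT : Integrable cosT := by
  obtain ⟨C, hC⟩ := sq_mul_cosT_bound
  have hcont : Continuous cosT := by
    have : Continuous sinT :=
      continuous_iff_continuousAt.2 fun t => (hasDerivAt_sinT t).continuousAt
    have h : cosT = fun t => 1 - t * sinT t := funext cosT_eq
    rw [h]; fun_prop
  set B := ∫ x in Set.Ioi (0:ℝ), ‖x ^ 1 * Real.exp (-x ^ 2 / 2)‖ with hB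
  have hB : ∀ t, |cosT t| ≤ B := by
    intro t
    rw [← Real.norm_eq_abs, cosT]
    refine norm_integral_le_of_norm_le (integrable_pow_gauss 1).norm.integrableOn
      (ae_of_all _ fun x => ?_)
    rw [norm_mul, pow_one]
    exact mul_le_of_le_one_right (norm_nonneg _) (Real.abs_cos_le_one _)
  refine (integrable_inv_one_add_sq.const_mul (B + C)).mono' hcont.aestronglyMeasurable
    (ae_of_all _ fun t => ?_)
  rw [Real.norm_eq_abs, ← div_eq_mul_inv, le_div_iff₀ (by positivity)]
  linarith [hB t, hC t]

/-! ### The Fourier transform of `|x| exp (-x² / 2)` and the eigenfunction -/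

/-- `x ↦ |x| exp (-x² / 2)`, the generator of the eigenfunction. -/
noncomputable def absGauss (x : ℝ) : ℝ := |x| * Real.exp (-x ^ 2 / 2)

lemma continuous_absGauss : Continuous absGauss := by unfold absGauss; fun_prop

lemma integrable_absGauss : Integrable absGauss := by
  refine (integrable_pow_gauss 1).norm.congr (ae_of_all _ fun x => ?_)
  simp [absGauss]

/-- The sine part vanishes by parity, and the cosine part folds onto the half-line. -/
lemma ft_absGauss (t : ℝ) :
    ∫ x : ℝ, Complex.exp (-Complex.I * (t : ℂ) * (x : ℂ)) * (absGauss x : ℂ)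
      = ((2 * cosT t : ℝ) : ℂ) := by
  have hc : Integrable fun x : ℝ => absGauss x * Real.cos (t * x) :=
    integrable_absGauss.mul_bdd (c := 1) (by fun_prop) (ae_of_all _ fun x => Real.abs_cos_le_one _)
  have hs : Integrable fun x : ℝ => absGauss x * Real.sin (t * x) :=
    integrable_absGauss.mul_bdd (c := 1) (by fun_prop) (ae_of_all _ fun x => Real.abs_sin_le_one _)
  have e : ∀ x : ℝ, Complex.exp (-Complex.I * (t : ℂ) * (x : ℂ)) * (absGauss x : ℂ)
      = ((absGauss x * Real.cos (t * x) : ℝ) : ℂ)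
        - Complex.I * ((absGauss x * Real.sin (t * x) : ℝ) : ℂ) := by
    intro x
    rw [show -Complex.I * (t : ℂ) * (x : ℂ) = (-((t : ℂ) * x)) * Complex.I by ring,
      Complex.exp_mul_I, Complex.cos_neg, Complex.sin_neg]
    push_cast
    ring
  have s0 : ∫ x : ℝ, absGauss x * Real.sin (t * x) = 0 := by
    have h := integral_neg_eq_self (fun x : ℝ => absGauss x * Real.sin (t * x)) volume
    have h' : ∀ x : ℝ, absGauss (-x) * Real.sin (t * -x) = -(absGauss x * Real.sin (t * x)) := by
      intro x; simp [absGauss]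
    simp only [h', integral_neg] at h
    linarith
  have c0 : ∫ x : ℝ, absGauss x * Real.cos (t * x) = 2 * cosT t := by
    rw [cosT, ← integral_comp_abs (f := fun x => x * Real.exp (-x ^ 2 / 2) * Real.cos (t * x))]
    congr 1; ext x
    have : Real.cos (t * |x|) = Real.cos (t * x) := by
      rcases abs_choice x with h | h <;> rw [h]
      rw [mul_neg, Real.cos_neg]
    simp only [absGauss, this, sq_abs]
  simp_rw [e]
  rw [integral_sub hc.ofReal (hs.ofReal.const_mul _), integral_const_mul, integral_complex_ofReal,
    integral_complex_ofReal, s0, c0]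
  simp

/-- Fourier inversion applied to `absGauss`, whose transform `2 cosT` is integrable. -/
lemma ft_cosT (t : ℝ) :
    ∫ x : ℝ, Complex.exp (-Complex.I * (t : ℂ) * (x : ℂ)) * (cosT x : ℂ)
      = ((Real.pi * absGauss t : ℝ) : ℂ) := by
  have hF : FourierTransform.fourier (fun x : ℝ => (absGauss x : ℂ))
      = fun w : ℝ => ((2 * cosT (2 * Real.pi * w) : ℝ) : ℂ) := by
    ext w
    rw [Real.fourier_real_eq_integral_exp_smul, ← ft_absGauss]
    congr 1; ext x
    rw [smul_eq_mul]
    congr 2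
    push_cast; ring
  have hint : Integrable (FourierTransform.fourier (fun x : ℝ => (absGauss x : ℂ))) := by
    rw [hF]
    exact ((integrable_cosT.comp_mul_left' (by positivity)).const_mul 2).ofReal
  have hinv := congrFun (Continuous.fourierInv_fourier_eq
    (Complex.continuous_ofReal.comp continuous_absGauss) integrable_absGauss.ofReal hint) (-t)
  simp only [Function.comp_def] at hinv
  have hscale := Measure.integral_comp_mul_left
    (fun y : ℝ => Complex.exp (-Complex.I * (t : ℂ) * (y : ℂ)) * (cosT y : ℂ)) (2 * Real.pi)
  rw [Real.fourierInv_eq', hF] at hinv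
  have hL : (∫ v : ℝ, Complex.exp (((2 * Real.pi * inner ℝ v (-t) : ℝ) : ℂ) * Complex.I) •
      ((2 * cosT (2 * Real.pi * v) : ℝ) : ℂ)) = 2 * ∫ v : ℝ,
        Complex.exp (-Complex.I * (t : ℂ) * ((2 * Real.pi * v : ℝ) : ℂ)) *
          (cosT (2 * Real.pi * v) : ℂ) := by
    rw [← integral_const_mul]
    congr 1; ext v
    rw [smul_eq_mul, show (((2 * Real.pi * inner ℝ v (-t) : ℝ) : ℂ) * Complex.I)
      = -Complex.I * (t : ℂ) * ((2 * Real.pi * v : ℝ) : ℂ) by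
        simp; ring]
    push_cast; ring
  rw [hL, hscale, abs_of_pos (by positivity)] at hinv
  have hev : absGauss (-t) = absGauss t := by simp [absGauss]
  rw [hev, Complex.real_smul] at hinv
  have hpi : (Real.pi : ℂ) ≠ 0 := by exact_mod_cast Real.pi_ne_zero
  push_cast at hinv ⊢
  rw [← hinv]
  field_simp

/-- The eigenfunction as a combination of `absGauss` and its Fourier transform `2 cosT`. -/
lemma phi_eq {x : ℝ} (hx : x ≠ 0) :
    |x| * Real.exp (-x ^ 2 / 2) * Ei (3 / 2) (x ^ 2 / 2)
      = 2 * √Real.pi * absGauss x - 2 * √2 * cosT x := by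
  have hpos : 0 < |x| := abs_pos.2 hx
  have hcos : cosT x = cosT |x| := by
    rcases abs_choice x with h | h <;> rw [h]
    simp [cosT]
  have h2 : √2 * √2 = (2:ℝ) := Real.mul_self_sqrt (by norm_num)
  have h2' : 0 < √(2:ℝ) := by positivity
  have hsq : √(x ^ 2 / 2) = |x| / √2 := by
    rw [Real.sqrt_div (sq_nonneg x), Real.sqrt_sq_eq_abs]
  have hE : Real.exp (-x ^ 2 / 2) * Real.exp (1 * (x ^ 2 / 2)) = 1 := by
    rw [← Real.exp_add]; ring_nf; simp
  rw [hcos, cosT_eq, sinT_eq, sq_abs, Ei_three_halves (by positivity), eiPrim, hsq,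
    mul_div_cancel₀ _ h2'.ne', absGauss]
  have : -2 * Real.exp (1 * (x ^ 2 / 2)) / (|x| / √2)
      = -2 * √2 * Real.exp (1 * (x ^ 2 / 2)) / |x| := by field_simp
  rw [this]
  generalize Real.exp (-x ^ 2 / 2) = a at hE ⊢
  generalize Real.exp (1 * (x ^ 2 / 2)) = b at hE ⊢
  field_simp
  linear_combination (-√2) * hE

/-- The function `φ₁(x) = |x| e^{-x²/2} Ei^{(3/2)}(x²/2)` is integrable on `ℝ` and, for
almost every `t`, its Fourier transform satisfies
`∫ e^{-itx} φ₁(x) dx = −√(2π) φ₁(t)`: `φ₁` is an eigenfunction of the Fourier transform on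
`ℝ` with eigenvalue `−(2π)^{1/2}`. -/
theorem statement17 :
    Integrable (fun x : ℝ => |x| * Real.exp (-x ^ 2 / 2) * Ei (3/2) (x ^ 2 / 2)) ∧
    ∀ᵐ t : ℝ ∂(volume : Measure ℝ),
      (∫ x : ℝ, Complex.exp (-Complex.I * (t : ℂ) * (x : ℂ)) *
          ((|x| * Real.exp (-x ^ 2 / 2) * Ei (3/2) (x ^ 2 / 2) : ℝ) : ℂ)) =
        ((-Real.sqrt (2 * Real.pi) *
          (|t| * Real.exp (-t ^ 2 / 2) * Ei (3/2) (t ^ 2 / 2)) : ℝ) : ℂ) := by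
  have hne : ∀ᵐ x : ℝ ∂(volume : Measure ℝ), x ≠ 0 := Measure.ae_ne volume 0
  constructor
  · refine ((integrable_absGauss.const_mul (2 * √Real.pi)).sub
      (integrable_cosT.const_mul (2 * √2))).congr ?_
    filter_upwards [hne] with x hx
    exact (phi_eq hx).symm
  · filter_upwards [hne] with t ht
    have hexp : ∀ f : ℝ → ℝ, Integrable f → Integrable fun x : ℝ =>
        Complex.exp (-Complex.I * (t : ℂ) * (x : ℂ)) * (f x : ℂ) := by
      intro f hf
      refine hf.ofReal.bdd_mul (c := 1) (by fun_prop) (ae_of_all _ fun x => ?_)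
      rw [show -Complex.I * (t : ℂ) * (x : ℂ) = ((-(t * x) : ℝ) : ℂ) * Complex.I by
        push_cast; ring, Complex.norm_exp_ofReal_mul_I]
    have hcongr : (∫ x : ℝ, Complex.exp (-Complex.I * (t : ℂ) * (x : ℂ)) *
          ((|x| * Real.exp (-x ^ 2 / 2) * Ei (3/2) (x ^ 2 / 2) : ℝ) : ℂ)) =
        ∫ x : ℝ, (((2 * √Real.pi : ℝ) : ℂ) *
            (Complex.exp (-Complex.I * (t : ℂ) * (x : ℂ)) * (absGauss x : ℂ))
          - ((2 * √2 : ℝ) : ℂ) *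
            (Complex.exp (-Complex.I * (t : ℂ) * (x : ℂ)) * (cosT x : ℂ))) := by
      refine integral_congr_ae ?_
      filter_upwards [hne] with x hx
      rw [phi_eq hx]
      push_cast; ring
    rw [hcongr, integral_sub ((hexp _ integrable_absGauss).const_mul _)
      ((hexp _ integrable_cosT).const_mul _), integral_const_mul, integral_const_mul,
      ft_absGauss, ft_cosT, phi_eq ht, ← Complex.ofReal_mul, ← Complex.ofReal_mul,
      ← Complex.ofReal_sub]
    congr 1
    have h2 : √2 * √2 = (2:ℝ) := Real.mul_self_sqrt (by norm_num)
    have hp : √Real.pi * √Real.pi = Real.pi := Real.mul_self_sqrt Real.pi_pos.le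
    rw [Real.sqrt_mul (by norm_num)]
    linear_combination (2 * √2 * absGauss t) * hp - (2 * √Real.pi * cosT t) * h2
end
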